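/- arXiv:1609.00966 — 4 statements merged into one kernel-verified Lean document; each statement's English description precedes it below -/
import Mathlib

section
/- For all φ*, φ ∈ H₋ and θ*, θ ∈ H₊, setting ψ̃* = (b·Q*Q + 𝔔)⁻¹ (b·Q*θ* + 𝔔 Q₋ φ*) and ψ̃ = (b·Q*Q + 𝔔)⁻¹ (b·Q*θ + 𝔔 Q₋ φ), one has Ǎ(θ*, θ; φ*, φ) = 𝒜_eff(θ*, θ; ψ̃*, ψ̃; φ*, φ). -/
open RealInnerProductSpace

theorem aux_isUnit {E : Type*} [NormedAddCommGroup E] [InnerProductSpace ℝ E]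
    [FiniteDimensional ℝ E] (T : Module.End ℝ E)
    (h : ∀ x : E, x ≠ 0 → 0 < ⟪T x, x⟫) : IsUnit T := by
  rw [LinearMap.isUnit_iff_ker_eq_bot, LinearMap.ker_eq_bot']
  intro x hx
  by_contra hne
  have := h x hne
  rw [hx, inner_zero_left] at this
  exact lt_irrefl _ this

theorem aux_inv {E : Type*} [NormedAddCommGroup E] [InnerProductSpace ℝ E]
    (T : Module.End ℝ E) (h : IsUnit T) (x : E) : T (Ring.inverse T x) = x := by
  rw [← Module.End.mul_apply, Ring.mul_inverse_cancel T h, Module.End.one_apply]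

theorem aux_inv' {E : Type*} [NormedAddCommGroup E] [InnerProductSpace ℝ E]
    (T : Module.End ℝ E) (h : IsUnit T) (x : E) : Ring.inverse T (T x) = x := by
  rw [← Module.End.mul_apply, Ring.inverse_mul_cancel T h, Module.End.one_apply]

/-- Lemma (preparation), first statement:
`Ǎ(θ*,θ;φ*,φ) = 𝒜_eff(θ*,θ; ψ̃*, ψ̃; φ*,φ)` where
`ψ̃⁽*⁾ = (b Q*Q + 𝔔)⁻¹ (b Q* θ⁽*⁾ + 𝔔 Q₋ φ⁽*⁾)`. -/
theorem stmt_5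
    {Hm H Hp : Type*}
    [NormedAddCommGroup Hm] [InnerProductSpace ℝ Hm] [FiniteDimensional ℝ Hm]
    [NormedAddCommGroup H] [InnerProductSpace ℝ H] [FiniteDimensional ℝ H]
    [NormedAddCommGroup Hp] [InnerProductSpace ℝ Hp] [FiniteDimensional ℝ Hp]
    (Qm : Hm →ₗ[ℝ] H) (Q : H →ₗ[ℝ] Hp)
    (b : ℝ) (hb : 0 < b)
    (Qf : Module.End ℝ H) (hQfsym : Qf.IsSymmetric)
    (hQfpos : ∀ x : H, x ≠ 0 → 0 < ⟪Qf x, x⟫)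
    (Qfc : Module.End ℝ Hp)
    (hQfc : Qfc = Ring.inverse
      (b⁻¹ • (1 : Module.End ℝ Hp)
        + Q ∘ₗ Ring.inverse Qf ∘ₗ LinearMap.adjoint Q))
    (𝔄 : Hm → Hm → ℝ)
    (θs θ : Hp) (φs φ : Hm) (ψts ψt : H)
    (hψts : ψts = Ring.inverse (b • (LinearMap.adjoint Q ∘ₗ Q) + Qf)
                    (b • LinearMap.adjoint Q θs + Qf (Qm φs)))
    (hψt : ψt = Ring.inverse (b • (LinearMap.adjoint Q ∘ₗ Q) + Qf)
                  (b • LinearMap.adjoint Q θ + Qf (Qm φ))) :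
    ⟪θs - (Q ∘ₗ Qm) φs, Qfc (θ - (Q ∘ₗ Qm) φ)⟫ + 𝔄 φs φ
      = b * ⟪θs - Q ψts, θ - Q ψt⟫
        + (⟪ψts - Qm φs, Qf (ψt - Qm φ)⟫ + 𝔄 φs φ) := by
  have hnn : ∀ x : H, 0 ≤ ⟪Qf x, x⟫ := by
    intro x
    by_cases hx : x = 0
    · simp [hx]
    · exact (hQfpos x hx).le
  have hU : IsUnit Qf := aux_isUnit Qf hQfpos
  have hA : IsUnit (b • (LinearMap.adjoint Q ∘ₗ Q) + Qf) := by
    apply aux_isUnit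
    intro x hx
    have h1 := hQfpos x hx
    have h2 : 0 ≤ b * ⟪Q x, Q x⟫ := mul_nonneg hb.le real_inner_self_nonneg
    simp only [LinearMap.add_apply, LinearMap.smul_apply, LinearMap.comp_apply, inner_add_left,
      real_inner_smul_left, LinearMap.adjoint_inner_left]
    linarith
  have hM : IsUnit (b⁻¹ • (1 : Module.End ℝ Hp)
        + Q ∘ₗ Ring.inverse Qf ∘ₗ LinearMap.adjoint Q) := by
    apply aux_isUnit
    intro x hx
    have h1 := hnn (Ring.inverse Qf (LinearMap.adjoint Q x))
    rw [aux_inv Qf hU, LinearMap.adjoint_inner_left, real_inner_comm] at h1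
    have h2 : 0 < b⁻¹ * ⟪x, x⟫ := mul_pos (inv_pos.2 hb) (real_inner_self_pos.2 hx)
    simp only [LinearMap.add_apply, LinearMap.smul_apply, LinearMap.comp_apply, inner_add_left,
      real_inner_smul_left, Module.End.one_apply]
    linarith
  have e1 : b • LinearMap.adjoint Q (Q ψt) + Qf ψt
      = b • LinearMap.adjoint Q θ + Qf (Qm φ) := by
    have := aux_inv _ hA (b • LinearMap.adjoint Q θ + Qf (Qm φ))
    rw [← hψt] at this
    simpa using this
  have e2 : Qf (ψt - Qm φ) = LinearMap.adjoint Q (b • (θ - Q ψt)) := by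
    simp only [map_sub, map_smul, smul_sub]
    rw [sub_eq_sub_iff_add_eq_add, add_comm, e1]
  have e3 : Qfc (θ - (Q ∘ₗ Qm) φ) = b • (θ - Q ψt) := by
    rw [hQfc]
    rw [← aux_inv' _ hM (b • (θ - Q ψt))]
    congr 1
    simp only [LinearMap.add_apply, LinearMap.smul_apply, LinearMap.comp_apply,
      Module.End.one_apply]
    rw [← e2, aux_inv' Qf hU, smul_smul, inv_mul_cancel₀ hb.ne', one_smul, map_sub]
    abel
  have e4 : θs - (Q ∘ₗ Qm) φs = (θs - Q ψts) + Q (ψts - Qm φs) := by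
    simp
  rw [e3, e2, e4, LinearMap.adjoint_inner_right, inner_add_left, real_inner_smul_right,
    real_inner_smul_right]
  ring
end

section
/- Let N ⊆ H and N₊ ⊆ H₊ be subsets, let φ_{*bg}, φ_bg : H × H → H₋ be maps, and let ψ_{*cr}, ψ_cr : H₊ × H₊ → H be maps taking values in N such that for all (θ*, θ) ∈ N₊ × N₊: (b·Q*Q + 𝔔) ψ_{*cr}(θ*, θ) = b·Q*θ* + 𝔔 Q₋ φ_{*bg}(ψ_{*cr}(θ*, θ), ψ_cr(θ*, θ)) and (b·Q*Q + 𝔔) ψ_cr(θ*, θ) = b·Q*θ + 𝔔 Q₋ φ_bg(ψ_{*cr}(θ*, θ), ψ_cr(θ*, θ)). Define φ̌_{*cp}(θ*, θ) = φ_{*bg}(ψ_{*cr}(θ*, θ), ψ_cr(θ*, θ)) and φ̌_cp(θ*, θ) = φ_bg(ψ_{*cr}(θ*, θ), ψ_cr(θ*, θ)). Then for all (θ*, θ) ∈ N₊ × N₊: 𝒜_eff(θ*, θ; ψ_{*cr}(θ*, θ), ψ_cr(θ*, θ); φ̌_{*cp}(θ*, θ), φ̌_cp(θ*, θ)) = Ǎ(θ*,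 θ; φ̌_{*cp}(θ*, θ), φ̌_cp(θ*, θ)). -/
open RealInnerProductSpace

theorem isUnit_of_pos_aux {E : Type*} [NormedAddCommGroup E] [InnerProductSpace ℝ E]
    [FiniteDimensional ℝ E] (f : Module.End ℝ E) (h : ∀ x : E, x ≠ 0 → 0 < inner ℝ (f x) x) :
    IsUnit f := by
  rw [LinearMap.isUnit_iff_ker_eq_bot, LinearMap.ker_eq_bot']
  intro x hx
  by_contra hne
  have := h x hne
  rw [hx, inner_zero_left] at this
  exact lt_irrefl _ this

/-- Proposition (concatenation of background fields), part (b):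
`𝒜_eff(θ*,θ; ψ*cr, ψcr; φ̌*cp, φ̌cp) = Ǎ(θ*,θ; φ̌*cp, φ̌cp)`. -/
theorem stmt_8
    {Hm H Hp : Type*}
    [NormedAddCommGroup Hm] [InnerProductSpace ℝ Hm] [FiniteDimensional ℝ Hm]
    [NormedAddCommGroup H] [InnerProductSpace ℝ H] [FiniteDimensional ℝ H]
    [NormedAddCommGroup Hp] [InnerProductSpace ℝ Hp] [FiniteDimensional ℝ Hp]
    (Qm : Hm →ₗ[ℝ] H) (Q : H →ₗ[ℝ] Hp)
    (b : ℝ) (hb : 0 < b)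
    (Qf : Module.End ℝ H) (hQfsym : Qf.IsSymmetric)
    (hQfpos : ∀ x : H, x ≠ 0 → 0 < ⟪Qf x, x⟫)
    (Qfc : Module.End ℝ Hp)
    (hQfc : Qfc = Ring.inverse
      (b⁻¹ • (1 : Module.End ℝ Hp)
        + Q ∘ₗ Ring.inverse Qf ∘ₗ LinearMap.adjoint Q))
    (𝔄 : Hm → Hm → ℝ)
    (N : Set H) (Np : Set Hp)
    (φsbg φbg : H → H → Hm)
    (ψscr ψcr : Hp → Hp → H)
    (hrange : ∀ θs θ : Hp, ψscr θs θ ∈ N ∧ ψcr θs θ ∈ N)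
    (hψscr : ∀ θs ∈ Np, ∀ θ ∈ Np,
      (b • (LinearMap.adjoint Q ∘ₗ Q) + Qf) (ψscr θs θ)
        = b • LinearMap.adjoint Q θs
          + Qf (Qm (φsbg (ψscr θs θ) (ψcr θs θ))))
    (hψcr : ∀ θs ∈ Np, ∀ θ ∈ Np,
      (b • (LinearMap.adjoint Q ∘ₗ Q) + Qf) (ψcr θs θ)
        = b • LinearMap.adjoint Q θ
          + Qf (Qm (φbg (ψscr θs θ) (ψcr θs θ))))
    (φscp φcp : Hp → Hp → Hm)
    (hφscp : ∀ θs θ : Hp, φscp θs θ = φsbg (ψscr θs θ) (ψcr θs θ))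
    (hφcp : ∀ θs θ : Hp, φcp θs θ = φbg (ψscr θs θ) (ψcr θs θ)) :
    ∀ θs ∈ Np, ∀ θ ∈ Np,
      b * ⟪θs - Q (ψscr θs θ), θ - Q (ψcr θs θ)⟫
        + (⟪ψscr θs θ - Qm (φscp θs θ), Qf (ψcr θs θ - Qm (φcp θs θ))⟫
            + 𝔄 (φscp θs θ) (φcp θs θ))
      = ⟪θs - (Q ∘ₗ Qm) (φscp θs θ), Qfc (θ - (Q ∘ₗ Qm) (φcp θs θ))⟫
          + 𝔄 (φscp θs θ) (φcp θs θ) := by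
  intro θs hθs θ hθ
  have hU : IsUnit Qf := isUnit_of_pos_aux Qf hQfpos
  have hr : ∀ x, Qf (Ring.inverse Qf x) = x := fun x => by
    have := LinearMap.congr_fun (Ring.mul_inverse_cancel Qf hU) x
    simpa using this
  have hl : ∀ x, Ring.inverse Qf (Qf x) = x := fun x => by
    have := LinearMap.congr_fun (Ring.inverse_mul_cancel Qf hU) x
    simpa using this
  have hnn : ∀ x : H, 0 ≤ ⟪Qf x, x⟫ := fun x => by
    by_cases hx : x = 0
    · simp [hx]
    · exact (hQfpos x hx).le
  have hM : IsUnit (b⁻¹ • (1 : Module.End ℝ Hp)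
        + Q ∘ₗ Ring.inverse Qf ∘ₗ LinearMap.adjoint Q) := by
    apply isUnit_of_pos_aux
    intro x hx
    have h1 := hnn (Ring.inverse Qf (LinearMap.adjoint Q x))
    rw [hr, LinearMap.adjoint_inner_left, real_inner_comm] at h1
    have h2 : 0 < b⁻¹ * ⟪x, x⟫ := mul_pos (inv_pos.2 hb) (real_inner_self_pos.2 hx)
    simp only [LinearMap.add_apply, LinearMap.smul_apply, Module.End.one_apply,
      LinearMap.comp_apply, inner_add_left, real_inner_smul_left]
    linarith
  have e := hψcr θs hθs θ hθ
  rw [← hφcp] at e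
  generalize ψcr θs θ = ψ at *
  generalize ψscr θs θ = ψs at *
  generalize φcp θs θ = φ at *
  generalize φscp θs θ = φs at *
  have e1 : Qf (ψ - Qm φ) = LinearMap.adjoint Q (b • (θ - Q ψ)) := by
    simp only [LinearMap.add_apply, LinearMap.smul_apply, LinearMap.comp_apply] at e
    simp only [map_sub, map_smul, smul_sub]
    rw [sub_eq_sub_iff_add_eq_add, add_comm, e]
  have e2 : (b⁻¹ • (1 : Module.End ℝ Hp)
        + Q ∘ₗ Ring.inverse Qf ∘ₗ LinearMap.adjoint Q) (b • (θ - Q ψ))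
        = θ - (Q ∘ₗ Qm) φ := by
    simp only [LinearMap.add_apply, LinearMap.smul_apply, Module.End.one_apply,
      LinearMap.comp_apply]
    rw [← e1, hl, smul_smul, inv_mul_cancel₀ hb.ne', one_smul, map_sub]
    abel
  have e3 : Qfc (θ - (Q ∘ₗ Qm) φ) = b • (θ - Q ψ) := by
    rw [← e2, hQfc]
    have := LinearMap.congr_fun (Ring.inverse_mul_cancel _ hM) (b • (θ - Q ψ))
    rwa [Module.End.mul_apply, Module.End.one_apply] at this
  rw [e3, e1, LinearMap.adjoint_inner_right, ← add_assoc, ← real_inner_smul_right,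
    ← inner_add_left, LinearMap.comp_apply, map_sub, sub_add_sub_cancel]
end

section
/- Assume 𝔄 : H₋ × H₋ → ℝ is differentiable, and write ∇₁𝔄 and ∇₂𝔄 for its gradients with respect to the first and second H₋-variables. Let N ⊆ H and N₊ ⊆ H₊ be subsets, let φ_{*bg}, φ_bg : H × H → H₋ satisfy, for all (ψ*, ψ) ∈ N × N: Q₋*𝔔Q₋ φ_{*bg}(ψ*, ψ) + ∇₂𝔄(φ_{*bg}(ψ*, ψ), φ_bg(ψ*, ψ)) = Q₋*𝔔ψ* and Q₋*𝔔Q₋ φ_bg(ψ*, ψ) + ∇₁𝔄(φ_{*bg}(ψ*, ψ), φ_bg(ψ*, ψ)) = Q₋*𝔔ψ, and let ψ_{*cr}, ψ_cr : H₊ × H₊ → H take values in N and satisfy, for all (θ*, θ) ∈ N₊ × N₊: (b·Q*Q + 𝔔) ψ_{*cr}(θ*, θ) = b·Q*θ* + 𝔔 Q₋ φ_{*bg}(ψ_{*cr}(θ*, θ), ψ_cr(θ*, θ)) and (b·Q*Q + 𝔔) ψ_cr(θ*, θ) = b·Q*θ + 𝔔 Q₋ φ_bg(ψ_{*cr}(θ*,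 θ), ψ_cr(θ*, θ)). Define φ̌_{*cp}(θ*, θ) = φ_{*bg}(ψ_{*cr}(θ*, θ), ψ_cr(θ*, θ)) and φ̌_cp(θ*, θ) = φ_bg(ψ_{*cr}(θ*, θ), ψ_cr(θ*, θ)). Then for all (θ*, θ) ∈ N₊ × N₊: Q̌₋*𝔔̌Q̌₋ φ̌_{*cp}(θ*, θ) + ∇₂𝔄(φ̌_{*cp}(θ*, θ), φ̌_cp(θ*, θ)) = Q̌₋*𝔔̌θ* and Q̌₋*𝔔̌Q̌₋ φ̌_cp(θ*, θ) + ∇₁𝔄(φ̌_{*cp}(θ*, θ), φ̌_cp(θ*, θ)) = Q̌₋*𝔔̌θ. -/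
open RealInnerProductSpace

lemma aux_unit {E : Type*} [NormedAddCommGroup E] [InnerProductSpace ℝ E] [FiniteDimensional ℝ E]
    (F : Module.End ℝ E) (h : ∀ x : E, x ≠ 0 → 0 < ⟪F x, x⟫) : IsUnit F := by
  rw [LinearMap.isUnit_iff_ker_eq_bot, LinearMap.ker_eq_bot']
  intro x hx
  by_contra hne
  have := h x hne
  rw [hx, inner_zero_left] at this
  exact lt_irrefl _ this

lemma aux_core {Hm H Hp : Type*}
    [NormedAddCommGroup Hm] [InnerProductSpace ℝ Hm] [FiniteDimensional ℝ Hm]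
    [NormedAddCommGroup H] [InnerProductSpace ℝ H] [FiniteDimensional ℝ H]
    [NormedAddCommGroup Hp] [InnerProductSpace ℝ Hp] [FiniteDimensional ℝ Hp]
    (Qm : Hm →ₗ[ℝ] H) (Q : H →ₗ[ℝ] Hp)
    (b : ℝ) (hb : 0 < b)
    (Qf : Module.End ℝ H)
    (hQfpos : ∀ x : H, x ≠ 0 → 0 < ⟪Qf x, x⟫)
    (Qfc : Module.End ℝ Hp)
    (hQfc : Qfc = Ring.inverse
      (b⁻¹ • (1 : Module.End ℝ Hp)
        + Q ∘ₗ Ring.inverse Qf ∘ₗ LinearMap.adjoint Q))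
    (φ g : Hm) (ψ : H) (θ : Hp)
    (h1 : (LinearMap.adjoint Qm ∘ₗ Qf ∘ₗ Qm) φ + g = (LinearMap.adjoint Qm ∘ₗ Qf) ψ)
    (h2 : (b • (LinearMap.adjoint Q ∘ₗ Q) + Qf) ψ = b • LinearMap.adjoint Q θ + Qf (Qm φ)) :
    (LinearMap.adjoint (Q ∘ₗ Qm) ∘ₗ Qfc ∘ₗ (Q ∘ₗ Qm)) φ + g
      = (LinearMap.adjoint (Q ∘ₗ Qm) ∘ₗ Qfc) θ := by
  have hU := aux_unit Qf hQfpos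
  have hl : ∀ x, Ring.inverse Qf (Qf x) = x := fun x => by
    have := congrArg (fun f : Module.End ℝ H => f x) (Ring.inverse_mul_cancel Qf hU)
    simpa using this
  have hr : ∀ x, Qf (Ring.inverse Qf x) = x := fun x => by
    have := congrArg (fun f : Module.End ℝ H => f x) (Ring.mul_inverse_cancel Qf hU)
    simpa using this
  have hM : IsUnit (b⁻¹ • (1 : Module.End ℝ Hp)
        + Q ∘ₗ Ring.inverse Qf ∘ₗ LinearMap.adjoint Q) := by
    apply aux_unit
    intro x hx
    have e : 0 ≤ ⟪Q (Ring.inverse Qf (LinearMap.adjoint Q x)), x⟫ := by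
      rw [← LinearMap.adjoint_inner_right]
      set y := Ring.inverse Qf (LinearMap.adjoint Q x) with hy
      have : LinearMap.adjoint Q x = Qf y := (hr _).symm
      rw [this, real_inner_comm]
      by_cases h0 : y = 0
      · simp [h0]
      · exact (hQfpos y h0).le
    have e2 : 0 < b⁻¹ * ⟪x, x⟫ := mul_pos (inv_pos.2 hb) (real_inner_self_pos.2 hx)
    simp only [LinearMap.add_apply, LinearMap.smul_apply, Module.End.one_apply,
      LinearMap.comp_apply, inner_add_left, real_inner_smul_left]
    linarith
  have hc : ∀ x, Qfc ((b⁻¹ • (1 : Module.End ℝ Hp)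
        + Q ∘ₗ Ring.inverse Qf ∘ₗ LinearMap.adjoint Q) x) = x := fun x => by
    have := congrArg (fun f : Module.End ℝ Hp => f x) (Ring.inverse_mul_cancel _ hM)
    rw [← hQfc] at this
    exact this
  simp only [LinearMap.add_apply, LinearMap.smul_apply, LinearMap.comp_apply] at h1 h2
  have h3 : Qf (ψ - Qm φ) = LinearMap.adjoint Q (b • (θ - Q ψ)) := by
    simp only [map_sub, map_smul, smul_sub]
    rw [sub_eq_sub_iff_add_eq_add, ← h2]; abel
  have h4 : Ring.inverse Qf (LinearMap.adjoint Q (b • (θ - Q ψ))) = ψ - Qm φ := by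
    rw [← h3, hl]
  have h5 := hc (b • (θ - Q ψ))
  simp only [LinearMap.add_apply, LinearMap.smul_apply, LinearMap.comp_apply,
    Module.End.one_apply] at h5
  rw [h4, inv_smul_smul₀ hb.ne', map_sub, sub_add_sub_cancel, map_sub] at h5
  rw [LinearMap.adjoint_comp]
  simp only [LinearMap.comp_apply]
  have hg : g = LinearMap.adjoint Qm (Qf (ψ - Qm φ)) := by
    rw [map_sub, map_sub, ← h1]; abel
  rw [hg, h3, ← h5]
  simp only [map_sub]
  abel

/-- Proposition (concatenation of background fields), part (c):
the compositions `φ̌⁽*⁾cp` satisfy the next scale background field equations. -/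
theorem stmt_9
    {Hm H Hp : Type*}
    [NormedAddCommGroup Hm] [InnerProductSpace ℝ Hm] [FiniteDimensional ℝ Hm]
    [NormedAddCommGroup H] [InnerProductSpace ℝ H] [FiniteDimensional ℝ H]
    [NormedAddCommGroup Hp] [InnerProductSpace ℝ Hp] [FiniteDimensional ℝ Hp]
    (Qm : Hm →ₗ[ℝ] H) (Q : H →ₗ[ℝ] Hp)
    (b : ℝ) (hb : 0 < b)
    (Qf : Module.End ℝ H) (hQfsym : Qf.IsSymmetric)
    (hQfpos : ∀ x : H, x ≠ 0 → 0 < ⟪Qf x, x⟫)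
    (Qfc : Module.End ℝ Hp)
    (hQfc : Qfc = Ring.inverse
      (b⁻¹ • (1 : Module.End ℝ Hp)
        + Q ∘ₗ Ring.inverse Qf ∘ₗ LinearMap.adjoint Q))
    (𝔄 : Hm → Hm → ℝ)
    (h𝔄 : Differentiable ℝ (fun p : Hm × Hm => 𝔄 p.1 p.2))
    (N : Set H) (Np : Set Hp)
    (φsbg φbg : H → H → Hm)
    (hbg : ∀ ψs ∈ N, ∀ ψ ∈ N,
      (LinearMap.adjoint Qm ∘ₗ Qf ∘ₗ Qm) (φsbg ψs ψ)
          + gradient (fun y : Hm => 𝔄 (φsbg ψs ψ) y) (φbg ψs ψ)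
        = (LinearMap.adjoint Qm ∘ₗ Qf) ψs ∧
      (LinearMap.adjoint Qm ∘ₗ Qf ∘ₗ Qm) (φbg ψs ψ)
          + gradient (fun x : Hm => 𝔄 x (φbg ψs ψ)) (φsbg ψs ψ)
        = (LinearMap.adjoint Qm ∘ₗ Qf) ψ)
    (ψscr ψcr : Hp → Hp → H)
    (hrange : ∀ θs θ : Hp, ψscr θs θ ∈ N ∧ ψcr θs θ ∈ N)
    (hψscr : ∀ θs ∈ Np, ∀ θ ∈ Np,
      (b • (LinearMap.adjoint Q ∘ₗ Q) + Qf) (ψscr θs θ)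
        = b • LinearMap.adjoint Q θs
          + Qf (Qm (φsbg (ψscr θs θ) (ψcr θs θ))))
    (hψcr : ∀ θs ∈ Np, ∀ θ ∈ Np,
      (b • (LinearMap.adjoint Q ∘ₗ Q) + Qf) (ψcr θs θ)
        = b • LinearMap.adjoint Q θ
          + Qf (Qm (φbg (ψscr θs θ) (ψcr θs θ))))
    (φscp φcp : Hp → Hp → Hm)
    (hφscp : ∀ θs θ : Hp, φscp θs θ = φsbg (ψscr θs θ) (ψcr θs θ))
    (hφcp : ∀ θs θ : Hp, φcp θs θ = φbg (ψscr θs θ) (ψcr θs θ)) :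
    ∀ θs ∈ Np, ∀ θ ∈ Np,
      (LinearMap.adjoint (Q ∘ₗ Qm) ∘ₗ Qfc ∘ₗ (Q ∘ₗ Qm)) (φscp θs θ)
          + gradient (fun y : Hm => 𝔄 (φscp θs θ) y) (φcp θs θ)
        = (LinearMap.adjoint (Q ∘ₗ Qm) ∘ₗ Qfc) θs ∧
      (LinearMap.adjoint (Q ∘ₗ Qm) ∘ₗ Qfc ∘ₗ (Q ∘ₗ Qm)) (φcp θs θ)
          + gradient (fun x : Hm => 𝔄 x (φcp θs θ)) (φscp θs θ)
        = (LinearMap.adjoint (Q ∘ₗ Qm) ∘ₗ Qfc) θ := by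
  intro θs hθs θ hθ
  obtain ⟨m1, m2⟩ := hrange θs θ
  obtain ⟨e1, e2⟩ := hbg _ m1 _ m2
  rw [hφscp, hφcp]
  exact ⟨aux_core Qm Q b hb Qf hQfpos Qfc hQfc _ _ _ _ e1 (hψscr θs hθs θ hθ),
    aux_core Qm Q b hb Qf hQfpos Qfc hQfc _ _ _ _ e2 (hψcr θs hθs θ hθ)⟩
end

section
/- Assume in addition that D is invertible and that Δ + b·Q*Q is invertible, where Δ = 𝔔 − 𝔔 Q₋ S Q₋* 𝔔, and set C = (Δ + b·Q*Q)⁻¹. Then Š = S + S Q₋* 𝔔 C 𝔔 Q₋ S, where S = (D + Q₋*𝔔Q₋)⁻¹ and Š = (D + Q̌₋*𝔔̌Q̌₋)⁻¹. -/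
open RealInnerProductSpace

/-- Remark, part (c), second representation: `Š = S + S Q₋* 𝔔 C 𝔔 Q₋ S`. -/
theorem stmt_15
    {Hm H Hp : Type*}
    [NormedAddCommGroup Hm] [InnerProductSpace ℝ Hm] [FiniteDimensional ℝ Hm]
    [NormedAddCommGroup H] [InnerProductSpace ℝ H] [FiniteDimensional ℝ H]
    [NormedAddCommGroup Hp] [InnerProductSpace ℝ Hp] [FiniteDimensional ℝ Hp]
    (Qm : Hm →ₗ[ℝ] H) (Q : H →ₗ[ℝ] Hp)
    (b : ℝ) (hb : 0 < b)
    (Qf : Module.End ℝ H) (hQfsym : Qf.IsSymmetric)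
    (hQfpos : ∀ x : H, x ≠ 0 → 0 < ⟪Qf x, x⟫)
    (Qfc : Module.End ℝ Hp)
    (hQfc : Qfc = Ring.inverse
      (b⁻¹ • (1 : Module.End ℝ Hp)
        + Q ∘ₗ Ring.inverse Qf ∘ₗ LinearMap.adjoint Q))
    (D : Module.End ℝ Hm)
    (hDQ : IsUnit (D + LinearMap.adjoint Qm ∘ₗ Qf ∘ₗ Qm))
    (hDQc : IsUnit (D + LinearMap.adjoint (Q ∘ₗ Qm) ∘ₗ Qfc ∘ₗ (Q ∘ₗ Qm)))
    (S : Module.End ℝ Hm)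
    (hS : S = Ring.inverse (D + LinearMap.adjoint Qm ∘ₗ Qf ∘ₗ Qm))
    (Sc : Module.End ℝ Hm)
    (hSc : Sc = Ring.inverse (D + LinearMap.adjoint (Q ∘ₗ Qm) ∘ₗ Qfc ∘ₗ (Q ∘ₗ Qm)))
    (hD : IsUnit D)
    (Δ : Module.End ℝ H)
    (hΔ : Δ = Qf - Qf ∘ₗ Qm ∘ₗ S ∘ₗ LinearMap.adjoint Qm ∘ₗ Qf)
    (hΔb : IsUnit (Δ + b • (LinearMap.adjoint Q ∘ₗ Q)))
    (C : Module.End ℝ H)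
    (hC : C = Ring.inverse (Δ + b • (LinearMap.adjoint Q ∘ₗ Q))) :
    Sc = S + S ∘ₗ LinearMap.adjoint Qm ∘ₗ Qf ∘ₗ C ∘ₗ Qf ∘ₗ Qm ∘ₗ S := by
  have hA : IsUnit Qf := by
    rw [LinearMap.isUnit_iff_ker_eq_bot, LinearMap.ker_eq_bot']
    intro x hx
    by_contra h
    have := hQfpos x h
    simp [hx] at this
  have inv1 : ∀ x, Ring.inverse Qf (Qf x) = x := fun x => by
    have := Ring.inverse_mul_cancel Qf hA
    exact LinearMap.congr_fun this x
  have inv2 : ∀ x, Qf (Ring.inverse Qf x) = x := fun x => by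
    have := Ring.mul_inverse_cancel Qf hA
    exact LinearMap.congr_fun this x
  have hM : IsUnit (b⁻¹ • (1 : Module.End ℝ Hp)
        + Q ∘ₗ Ring.inverse Qf ∘ₗ LinearMap.adjoint Q) := by
    rw [LinearMap.isUnit_iff_ker_eq_bot, LinearMap.ker_eq_bot']
    intro x hx
    by_contra h
    have h1 : ⟪b⁻¹ • x + Q (Ring.inverse Qf (LinearMap.adjoint Q x)), x⟫ = 0 := by
      have h0 : b⁻¹ • x + Q (Ring.inverse Qf (LinearMap.adjoint Q x)) = 0 := by
        simpa using hx
      rw [h0, inner_zero_left]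
    rw [inner_add_left, real_inner_smul_left, ← LinearMap.adjoint_inner_right] at h1
    have h2 : 0 ≤ ⟪Ring.inverse Qf (LinearMap.adjoint Q x), LinearMap.adjoint Q x⟫ := by
      generalize hz : Ring.inverse Qf (LinearMap.adjoint Q x) = z
      have : LinearMap.adjoint Q x = Qf z := by rw [← hz, inv2]
      rw [this, real_inner_comm]
      by_cases h : z = 0
      · simp [h]
      · exact (hQfpos z h).le
    have h3 : 0 < ⟪x, x⟫ := real_inner_self_pos.2 h
    have : 0 < b⁻¹ * ⟪x, x⟫ := by positivity
    linarith
  have invM : ∀ x, Qfc (b⁻¹ • x + Q (Ring.inverse Qf (LinearMap.adjoint Q x))) = x := fun x => by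
    have := Ring.inverse_mul_cancel _ hM
    rw [← hQfc] at this
    simpa using LinearMap.congr_fun this x
  have invS : ∀ x, D (S x) + LinearMap.adjoint Qm (Qf (Qm (S x))) = x := fun x => by
    have := Ring.mul_inverse_cancel _ hDQ
    rw [← hS] at this
    simpa using LinearMap.congr_fun this x
  have invC : ∀ x, Δ (C x) + b • LinearMap.adjoint Q (Q (C x)) = x := fun x => by
    have := Ring.mul_inverse_cancel _ hΔb
    rw [← hC] at this
    simpa using LinearMap.congr_fun this x
  have invSc : ∀ x, Sc (D x + LinearMap.adjoint Qm (LinearMap.adjoint Q (Qfc (Q (Qm x))))) = x :=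
    fun x => by
    have := Ring.inverse_mul_cancel _ hDQc
    rw [← hSc] at this
    simpa [LinearMap.adjoint_comp] using LinearMap.congr_fun this x
  ext y
  simp only [LinearMap.add_apply, LinearMap.comp_apply]
  generalize hw : C (Qf (Qm (S y))) = w
  have e1 := invC (Qf (Qm (S y)))
  rw [hw, hΔ] at e1
  simp only [LinearMap.sub_apply, LinearMap.comp_apply] at e1
  have e2 := invS y
  have e3 := invS (LinearMap.adjoint Qm (Qf w))
  generalize hv : S y + S (LinearMap.adjoint Qm (Qf w)) = v
  have e4 : D v + LinearMap.adjoint Qm (Qf (Qm v)) = y + LinearMap.adjoint Qm (Qf w) := by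
    rw [← hv]
    simp only [map_add]
    rw [add_add_add_comm, e2, e3]
  have e5 : b • LinearMap.adjoint Q (Q w) = Qf (Qm v) - Qf w := by
    rw [← hv]
    simp only [map_add]
    rw [← e1]
    abel
  have e6 : Qfc (Q (Qm v)) = b • Q w := by
    have := invM (b • Q w)
    rw [map_smul (LinearMap.adjoint Q), e5, map_sub, inv1, inv1, smul_smul,
      inv_mul_cancel₀ hb.ne', one_smul, ← map_add, add_sub_cancel] at this
    exact this
  have e7 := invSc v
  rw [e6, map_smul (LinearMap.adjoint Q), e5, map_sub, ← add_sub_assoc, e4,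
    add_sub_cancel_right] at e7
  exact e7
end
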